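/- Suppose Q is a transition kernel on ℤ^d with invariant measure π satisfying c ≤ π(x) ≤ C for all x (0 < c ≤ C < ∞), Q is strongly irreducible with constants (ε,N), and Q has range bounded by B. Then there exists an integer m ≥ 1, depending only on d, c, C, ε, N and B, such that the transition kernel (Q^m)*(Q^m) satisfies Assumption A.1 with some constants (K,δ). -/

import Mathlib

open scoped Classical

noncomputable section

/-- Points of `ℤ^d`. -/
abbrev Zd (d : ℕ) := Fin d → ℤ

/-- Euclidean norm on `ℤ^d`. -/
def eucNorm {d : ℕ} (v : Zd d) : ℝ := Real.sqrt (∑ i, ((v i : ℝ)) ^ 2)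

/-- `n`-fold composition of a transition kernel. -/
def kerpow {d : ℕ} (Q : Zd d → Zd d → ℝ) : ℕ → Zd d → Zd d → ℝ
  | 0 => fun x y => if x = y then 1 else 0
  | m + 1 => fun x y => ∑' zz : Zd d, kerpow Q m x zz * Q zz y

/-- Adjoint of a kernel with respect to the measure `π`. -/
def adjK {d : ℕ} (π : Zd d → ℝ) (Q : Zd d → Zd d → ℝ) (x y : Zd d) : ℝ :=
  π y * Q y x / π x

/-- Composition of two kernels. -/
def compK {d : ℕ} (Q₁ Q₂ : Zd d → Zd d → ℝ) (x y : Zd d) : ℝ :=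
  ∑' zz : Zd d, Q₁ x zz * Q₂ zz y

/-- Dirichlet form of the kernel `Q` with respect to `π`. -/
def dirichlet {d : ℕ} (π : Zd d → ℝ) (Q : Zd d → Zd d → ℝ) (f : Zd d → ℝ) : ℝ :=
  (1 / 2) * ∑' p : Zd d × Zd d, (f p.2 - f p.1) ^ 2 * π p.1 * Q p.1 p.2

/-- `L²(π)`-norm. -/
def l2norm {d : ℕ} (π : Zd d → ℝ) (f : Zd d → ℝ) : ℝ := Real.sqrt (∑' x, (f x) ^ 2 * π x)

/-- `L¹(π)`-norm. -/
def l1norm {d : ℕ} (π : Zd d → ℝ) (f : Zd d → ℝ) : ℝ := ∑' x, |f x| * π x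

/-- Maximum norm on `ℤ^d`, as a natural number. -/
def maxNorm {d : ℕ} (v : Zd d) : ℕ := Finset.univ.sup fun i => (v i).natAbs

/-- Assumption A.1 with constants `(K, δ)`. -/
def AssumptionA1 {d : ℕ} (Q : Zd d → Zd d → ℝ) (K : ℕ) (δ : ℝ) : Prop :=
  ∀ x y : Zd d, maxNorm (y - x) ≤ 3 * K + 1 →
    ∃ y' : Zd d, maxNorm (y' - y) ≤ K ∧ δ ≤ Q x y'
section MaxNorm

variable {d : ℕ}

lemma maxNorm_le_iff {v : Zd d} {n : ℕ} : maxNorm v ≤ n ↔ ∀ i, (v i).natAbs ≤ n := by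
  simp [maxNorm]

lemma maxNorm_sub_comm (x y : Zd d) : maxNorm (x - y) = maxNorm (y - x) := by
  simp only [maxNorm, ← Int.natAbs_neg (x _ - y _), Pi.sub_apply, neg_sub]

lemma maxNorm_sub_le_add {x y z : Zd d} {a b : ℕ} (hxy : maxNorm (y - x) ≤ a)
    (hyz : maxNorm (z - y) ≤ b) : maxNorm (z - x) ≤ a + b := by
  rw [maxNorm_le_iff] at *
  intro i
  have h₁ := hxy i
  have h₂ := hyz i
  simp only [Pi.sub_apply] at *
  omega

lemma abs_le_eucNorm (v : Zd d) (i : Fin d) : |(v i : ℝ)| ≤ eucNorm v := by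
  rw [eucNorm, ← Real.sqrt_sq_eq_abs]
  exact Real.sqrt_le_sqrt
    (Finset.single_le_sum (f := fun i => (v i : ℝ) ^ 2) (fun _ _ => sq_nonneg _) (Finset.mem_univ i))

lemma maxNorm_le_ceil_of_eucNorm_le {v : Zd d} {B : ℝ} (h : eucNorm v ≤ B) :
    maxNorm v ≤ ⌈B⌉₊ := by
  rw [maxNorm_le_iff]
  intro i
  have h₁ : ((v i).natAbs : ℝ) ≤ (⌈B⌉₊ : ℝ) := by
    rw [Nat.cast_natAbs, Int.cast_abs]
    exact (abs_le_eucNorm v i).trans (h.trans (Nat.le_ceil B))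
  exact_mod_cast h₁

lemma eucNorm_single (i : Fin d) (a : ℤ) : eucNorm (Pi.single i a : Zd d) = |(a : ℝ)| := by
  rw [eucNorm, ← Real.sqrt_sq_eq_abs]
  congr 1
  rw [Finset.sum_eq_single i]
  · simp
  · intro j _ hj
    simp [Pi.single_eq_of_ne hj]
  · simp

/-- The closed ball of radius `b` around `x` for the maximum norm. -/
def maxBall (x : Zd d) (b : ℕ) : Finset (Zd d) :=
  Fintype.piFinset fun i => Finset.Icc (x i - b) (x i + b)

lemma mem_maxBall {x y : Zd d} {b : ℕ} : y ∈ maxBall x b ↔ maxNorm (y - x) ≤ b := by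
  simp only [maxBall, Fintype.mem_piFinset, Finset.mem_Icc, maxNorm_le_iff, Pi.sub_apply]
  refine forall_congr' fun i => ?_
  omega

lemma card_maxBall (x : Zd d) (b : ℕ) : (maxBall x b).card = (2 * b + 1) ^ d := by
  have h : ∀ i, (x i + b + 1 - (x i - b)).toNat = 2 * b + 1 := fun i => by omega
  simp [maxBall, h]

end MaxNorm

/-- A nonnegative family supported on a finite set takes a value at least its average there. -/
lemma exists_div_card_le_of_hasSum {α : Type*} {f : α → ℝ} {a : ℝ} {s : Finset α}
    (ha : 0 < a) (hf : HasSum f a) (hs : ∀ x ∉ s, f x = 0) :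
    ∃ x ∈ s, a / s.card ≤ f x := by
  have hsum : ∑ x ∈ s, f x = a := (hasSum_sum_of_ne_finset_zero hs).unique hf
  have hne : s.Nonempty := by
    rw [Finset.nonempty_iff_ne_empty]
    rintro rfl
    simp at hsum
    linarith
  apply Finset.exists_le_of_sum_le hne
  have : (s.card : ℝ) ≠ 0 := by exact_mod_cast hne.card_pos.ne'
  rw [hsum, Finset.sum_const, nsmul_eq_mul, mul_div_cancel₀ _ this]

section Kernel

variable {d : ℕ} {Q : Zd d → Zd d → ℝ}

lemma kerpow_nonneg (hQ : ∀ x y, 0 ≤ Q x y) (n : ℕ) (x y : Zd d) : 0 ≤ kerpow Q n x y := by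
  induction n generalizing y with
  | zero => simp only [kerpow]; split_ifs <;> norm_num
  | succ n ih => exact tsum_nonneg fun z => mul_nonneg (ih z) (hQ z y)

lemma kerpow_one (x y : Zd d) : kerpow Q 1 x y = Q x y := by
  simp only [kerpow]
  rw [tsum_eq_single x]
  · simp
  · intro z hz
    simp [hz.symm]

lemma summable_mul_of_range {b : ℕ} (hr : ∀ x y, b < maxNorm (y - x) → Q x y = 0)
    (f : Zd d → ℝ) (y : Zd d) : Summable fun z => f z * Q z y := by
  apply summable_of_ne_finset_zero (s := maxBall y b)
  intro z hz
  rw [mem_maxBall, maxNorm_sub_comm, not_le] at hz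
  simp [hr z y hz]

lemma kerpow_eq_zero_of_range {b : ℕ} (hr : ∀ x y, b < maxNorm (y - x) → Q x y = 0)
    (n : ℕ) (x y : Zd d) (h : n * b < maxNorm (y - x)) : kerpow Q n x y = 0 := by
  induction n generalizing y with
  | zero =>
    have hxy : x ≠ y := by
      rintro rfl
      simp [maxNorm] at h
    simp [kerpow, hxy]
  | succ n ih =>
    simp only [kerpow]
    have hz : ∀ z, kerpow Q n x z * Q z y = 0 := by
      intro z
      by_cases h₁ : n * b < maxNorm (z - x)
      · rw [ih z h₁, zero_mul]
      · rw [hr z y, mul_zero]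
        by_contra h₂
        have := maxNorm_sub_le_add (not_lt.mp h₁) (not_lt.mp h₂)
        rw [Nat.succ_mul] at h
        omega
    simp [hz]

lemma kerpow_mul_le_kerpow_add {b : ℕ} (hQ : ∀ x y, 0 ≤ Q x y)
    (hr : ∀ x y, b < maxNorm (y - x) → Q x y = 0) (m n : ℕ) (x y z : Zd d) :
    kerpow Q m x y * kerpow Q n y z ≤ kerpow Q (m + n) x z := by
  induction n generalizing z with
  | zero =>
    by_cases h : y = z
    · simp [kerpow, h]
    · simpa [kerpow, h] using kerpow_nonneg hQ m x z
  | succ n ih =>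
    rw [← Nat.add_assoc]
    simp only [kerpow]
    rw [← tsum_mul_left]
    simp only [← mul_assoc]
    exact (summable_mul_of_range hr _ z).tsum_le_tsum
      (fun w => mul_le_mul_of_nonneg_right (ih w) (hQ w z)) (summable_mul_of_range hr _ z)

lemma pow_add_le_kerpow_add {b : ℕ} (hQ : ∀ x y, 0 ≤ Q x y)
    (hr : ∀ x y, b < maxNorm (y - x) → Q x y = 0) {η : ℝ} (hη : 0 ≤ η) {m n k l : ℕ}
    {x y z : Zd d} (h₁ : η ^ k ≤ kerpow Q m x y) (h₂ : η ^ l ≤ kerpow Q n y z) :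
    η ^ (k + l) ≤ kerpow Q (m + n) x z := by
  rw [pow_add]
  exact (mul_le_mul h₁ h₂ (pow_nonneg hη l) (kerpow_nonneg hQ m x y)).trans
    (kerpow_mul_le_kerpow_add hQ hr m n x y z)

/-- Under strong irreducibility, `y` is reached from `x` in a number of steps controlled by the
`ℓ¹`-distance of the two points. -/
lemma exists_pow_le_kerpow {b N : ℕ} (hQ : ∀ x y, 0 ≤ Q x y)
    (hr : ∀ x y, b < maxNorm (y - x) → Q x y = 0) {η : ℝ} (hη : 0 ≤ η) (hη1 : η ≤ 1)
    (hirr : ∀ x e : Zd d, eucNorm e = 1 → ∃ n ≤ N, η ≤ kerpow Q n x (x + e))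
    (k : ℕ) (x y : Zd d) (hk : ∑ i, (y i - x i).natAbs ≤ k) :
    ∃ n ≤ N * k, η ^ k ≤ kerpow Q n x y := by
  induction k generalizing x with
  | zero =>
    have hxy : x = y := by
      funext i
      have := (Finset.sum_eq_zero_iff.mp (Nat.le_zero.mp hk)) i (Finset.mem_univ i)
      omega
    exact ⟨0, Nat.zero_le _, by simp [kerpow, hxy]⟩
  | succ k ih =>
    by_cases hxy : x = y
    · exact ⟨0, Nat.zero_le _, by simpa [kerpow, hxy] using pow_le_one₀ hη hη1⟩
    obtain ⟨i, hi⟩ := Function.ne_iff.mp hxy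
    have hs : (y i - x i).sign.natAbs = 1 := Int.natAbs_sign_of_ne_zero (by omega)
    have he : eucNorm (Pi.single i (y i - x i).sign : Zd d) = 1 := by
      rw [eucNorm_single, ← Int.cast_abs, Int.abs_eq_natAbs, hs]
      norm_num
    obtain ⟨n₁, hn₁, h₁⟩ := hirr x _ he
    have hlt : ∑ j, (y j - (x + Pi.single i (y i - x i).sign : Zd d) j).natAbs
        < ∑ j, (y j - x j).natAbs := by
      have hi' : (y i - (x + Pi.single i (y i - x i).sign : Zd d) i).natAbs
          < (y i - x i).natAbs := by
        rw [Pi.add_apply, Pi.single_eq_same]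
        rcases lt_or_gt_of_ne hi with h | h
        · rw [Int.sign_eq_one_of_pos (by omega)]; omega
        · rw [Int.sign_eq_neg_one_of_neg (by omega)]; omega
      refine Finset.sum_lt_sum (fun j _ => ?_) ⟨i, Finset.mem_univ i, hi'⟩
      by_cases hj : j = i
      · subst hj
        exact hi'.le
      · simp [Pi.single_eq_of_ne hj]
    obtain ⟨n₂, hn₂, h₂⟩ := ih (x + Pi.single i (y i - x i).sign) (by omega)
    refine ⟨n₁ + n₂, by rw [Nat.mul_succ]; omega, ?_⟩
    rw [Nat.add_comm k 1]
    exact pow_add_le_kerpow_add hQ hr hη (by simpa using h₁) h₂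

end Kernel

/-- Let `H t k x y` be a composable relation, meaning that `y` is reached from `x` in time `t` at
cost `k`. If every point has a successor within distance `b` and lies on a loop of length at most
`L`, then at any prescribed time some point near the starting point is reached. -/
lemma exists_near_of_loop {d : ℕ} {H : ℕ → ℕ → Zd d → Zd d → Prop} {b L : ℕ}
    (hrefl : ∀ x, H 0 0 x x)
    (hcomp : ∀ {t k t' k' x y z}, H t k x y → H t' k' y z → H (t + t') (k + k') x z)
    (hmono : ∀ {t k k' x y}, k ≤ k' → H t k x y → H t k' x y)
    (hstep : ∀ x, ∃ y, maxNorm (y - x) ≤ b ∧ H 1 1 x y)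
    (hloop : ∀ x, ∃ l, 1 ≤ l ∧ l ≤ L ∧ H l 2 x x) (t : ℕ) (x : Zd d) :
    ∃ y, maxNorm (y - x) ≤ L * b ∧ H t (2 * t) x y := by
  have hsteps : ∀ t : ℕ, ∃ y, maxNorm (y - x) ≤ t * b ∧ H t t x y := by
    intro t
    induction t with
    | zero => exact ⟨x, by simp [maxNorm], hrefl x⟩
    | succ t ih =>
      obtain ⟨y, hy, hxy⟩ := ih
      obtain ⟨z, hz, hyz⟩ := hstep y
      exact ⟨z, by rw [Nat.succ_mul]; exact maxNorm_sub_le_add hy hz, hcomp hxy hyz⟩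
  obtain ⟨l, hl, hlL, hlx⟩ := hloop x
  induction t using Nat.strong_induction_on with
  | _ t ih =>
    by_cases htl : t < l
    · obtain ⟨y, hy, hxy⟩ := hsteps t
      exact ⟨y, hy.trans (Nat.mul_le_mul_right b (by omega)), hmono (by omega) hxy⟩
    · obtain ⟨y, hy, hxy⟩ := ih (t - l) (by omega)
      refine ⟨y, hy, ?_⟩
      have h := hcomp hlx hxy
      rw [Nat.add_sub_cancel' (not_lt.mp htl)] at h
      exact hmono (by omega) h

theorem assumptionA1_for_power
    (d : ℕ) (hd : 0 < d) (c C ε B : ℝ) (N : ℕ)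
    (hc : 0 < c) (hcC : c ≤ C) (hε : 0 < ε) (hB : 0 < B) :
    ∃ m : ℕ, 1 ≤ m ∧
      ∀ (Q : Zd d → Zd d → ℝ) (π : Zd d → ℝ),
        (∀ x y, 0 ≤ Q x y) →
        (∀ x, HasSum (fun y => Q x y) 1) →
        (∀ x, 0 < π x) →
        (∀ y, HasSum (fun x => π x * Q x y) (π y)) →
        (∀ x, c ≤ π x ∧ π x ≤ C) →
        (∀ (x e : Zd d), eucNorm e = 1 → ∃ nn ≤ N, ε ≤ kerpow Q nn x (x + e)) →
        (∀ x y : Zd d, B < eucNorm (y - x) → Q x y = 0) →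
        ∃ (K : ℕ) (δ : ℝ), 0 < δ ∧
          AssumptionA1 (compK (adjK π (kerpow Q m)) (kerpow Q m)) K δ := by
  set b : ℕ := ⌈B⌉₊
  set R : ℕ := 2 * N * b
  set D : ℕ := d * (4 * R + 1)
  set m : ℕ := N * D + 1
  refine ⟨m, Nat.le_add_left 1 _, fun Q π hQ hsum hπ hinv hπb hirr hrange => ?_⟩
  have hC : 0 < C := hc.trans_le hcC
  set S : ℝ := (((2 * b + 1) ^ d : ℕ) : ℝ) with hS
  have hS1 : 1 ≤ S := Nat.one_le_cast.mpr (Nat.one_le_pow _ _ (Nat.succ_pos _))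
  have hS0 : 0 < S := one_pos.trans_le hS1
  have hcC1 : c / C ≤ 1 := (div_le_one hC).mpr hcC
  set η : ℝ := min ε (c / C / S)
  have hη : 0 < η := lt_min hε (by positivity)
  have hηε : η ≤ ε := min_le_left _ _
  have hηS : η ≤ 1 / S := (min_le_right _ _).trans (by gcongr)
  have hη1 : η ≤ 1 := hηS.trans ((div_le_one hS0).mpr hS1)
  have hr : ∀ x y, b < maxNorm (y - x) → Q x y = 0 := fun x y h => hrange x y <| by
    by_contra h'
    exact absurd (maxNorm_le_ceil_of_eucNorm_le (not_lt.mp h')) (not_le.mpr h)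
  have hirr' : ∀ x e : Zd d, eucNorm e = 1 → ∃ n ≤ N, η ≤ kerpow Q n x (x + e) := by
    intro x e he
    obtain ⟨n, hn, h⟩ := hirr x e he
    exact ⟨n, hn, hηε.trans h⟩
  have hmono : ∀ {k k' : ℕ} {a : ℝ}, k ≤ k' → η ^ k ≤ a → η ^ k' ≤ a :=
    fun h h' => (pow_le_pow_of_le_one hη.le hη1 h).trans h'
  have hloop : ∀ x, ∃ l, 1 ≤ l ∧ l ≤ 2 * N ∧ η ^ 2 ≤ kerpow Q l x x := by
    intro x
    set e : Zd d := Pi.single ⟨0, hd⟩ 1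
    have he : e ≠ 0 := by simp [e]
    obtain ⟨n₁, hn₁, h₁⟩ := hirr' x e (by simp [e, eucNorm_single])
    obtain ⟨n₂, hn₂, h₂⟩ := hirr' (x + e) (-e) (by
      rw [← Pi.single_neg, eucNorm_single]; simp)
    rw [add_neg_cancel_right] at h₂
    refine ⟨n₁ + n₂, ?_, by omega, ?_⟩
    · have : n₁ ≠ 0 := by
        rintro rfl
        simp only [kerpow, left_eq_add, he, if_false] at h₁
        linarith
      omega
    · exact pow_add_le_kerpow_add hQ hr hη.le (k := 1) (l := 1) (by simpa using h₁)
        (by simpa using h₂)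
  have hforward : ∀ t x, ∃ y, maxNorm (y - x) ≤ R ∧ η ^ (2 * t) ≤ kerpow Q t x y := by
    refine exists_near_of_loop (H := fun t k x y => η ^ k ≤ kerpow Q t x y)
      (fun x => by simp [kerpow]) (pow_add_le_kerpow_add hQ hr hη.le) hmono
      (fun x => ?_) hloop
    obtain ⟨y, hy, h⟩ := exists_div_card_le_of_hasSum (s := maxBall x b) one_pos (hsum x)
      (fun y hy => hr x y (by rwa [mem_maxBall, not_le] at hy))
    rw [card_maxBall] at h
    exact ⟨y, mem_maxBall.mp hy, by rw [pow_one, kerpow_one]; exact hηS.trans h⟩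
  have hbackward : ∀ t x, ∃ z, maxNorm (z - x) ≤ R ∧ η ^ (2 * t) ≤ kerpow Q t z x := by
    refine exists_near_of_loop (H := fun t k x y => η ^ k ≤ kerpow Q t y x)
      (fun x => by simp [kerpow]) (fun {t k t' k' _ _ _} h₁ h₂ => ?_) hmono
      (fun x => ?_) hloop
    · rw [Nat.add_comm k, Nat.add_comm t]
      exact pow_add_le_kerpow_add hQ hr hη.le h₂ h₁
    · obtain ⟨z, hz, h⟩ := exists_div_card_le_of_hasSum (s := maxBall x b) (hπ x) (hinv x)
        (fun z hz => by
          rw [mem_maxBall, maxNorm_sub_comm, not_le] at hz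
          simp [hr z x hz])
      rw [card_maxBall, ← hS] at h
      refine ⟨z, mem_maxBall.mp hz, ?_⟩
      rw [pow_one, kerpow_one]
      have h₁ : c / S ≤ C * Q z x :=
        (div_le_div_of_nonneg_right (hπb x).1 hS0.le).trans
          (h.trans (mul_le_mul_of_nonneg_right (hπb z).2 (hQ z x)))
      calc η ≤ c / C / S := min_le_right _ _
        _ = c / S / C := div_right_comm _ _ _
        _ ≤ Q z x := (div_le_iff₀' hC).mpr h₁
  refine ⟨R, c * η ^ (2 * m) / C * η ^ (D + 2 * m), by positivity, fun x y hxy => ?_⟩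
  obtain ⟨z, hz, hzx⟩ := hbackward m x
  have hzy : ∑ i, (y i - z i).natAbs ≤ D := by
    have h := maxNorm_sub_le_add (maxNorm_sub_comm z x ▸ hz) hxy
    rw [maxNorm_le_iff] at h
    calc ∑ i, (y i - z i).natAbs ≤ ∑ _i : Fin d, (4 * R + 1) :=
          Finset.sum_le_sum fun i _ => (h i).trans (by omega)
      _ = D := by simp [D]
  obtain ⟨n, hn, hny⟩ := exists_pow_le_kerpow hQ hr hη.le hη1 hirr' D z y hzy
  obtain ⟨y', hy', hyy'⟩ := hforward (m - n) y
  refine ⟨y', hy', ?_⟩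
  have hzy' : η ^ (D + 2 * m) ≤ kerpow Q m z y' := by
    have h := pow_add_le_kerpow_add hQ hr hη.le hny hyy'
    rw [Nat.add_sub_cancel' (by omega)] at h
    exact hmono (by omega) h
  have hpow := kerpow_nonneg hQ m
  have hadj : ∀ w, 0 ≤ adjK π (kerpow Q m) x w := fun w =>
    div_nonneg (mul_nonneg (hπ w).le (hpow w x)) (hπ x).le
  have hsummable : Summable fun w => adjK π (kerpow Q m) x w * kerpow Q m w y' :=
    summable_mul_of_range (kerpow_eq_zero_of_range hr m) _ y'
  refine le_trans ?_ (hsummable.le_tsum z fun w _ => mul_nonneg (hadj w) (hpow w y'))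
  refine mul_le_mul ?_ hzy' (by positivity) (hadj z)
  exact div_le_div₀ (mul_nonneg (hπ z).le (hpow z x))
    (mul_le_mul (hπb z).1 hzx (by positivity) (hπ z).le) (hπ x) (hπb x).2

end
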